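/- For every integer k ≥ 2, cov(𝔐_{k+1}) ≤ cov(𝔐_k); that is, the covering number of the Mycielski ideal on (k+1)^ω is at most the covering number of the Mycielski ideal on k^ω. -/

import Mathlib

/-!
Let `φ : k + 1 → k` be a retraction, i.e. a left inverse of the inclusion. If `A ∈ 𝔐ₖ`, then
`{f | φ ∘ f ∈ A} ∈ 𝔐ₖ₊₁`: when `g : X → k` is not a restriction of a member of `A`, the same `g`,
viewed as a map into `k + 1`, is not a restriction of a member of the preimage. Preimages of a
cover form a cover of at most the same cardinality, which gives the inequality. Since the infimum
of the empty set of cardinals is `0`, one also needs that `k^ω` has some cover by members of `𝔐ₖ`;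
for `k ≥ 2` the singletons form one.
-/

open Cardinal

/-- The set of restrictions to `X` of members of `A`. -/
def restrictSet {k : ℕ} (A : Set (ℕ → Fin k)) (X : Set ℕ) : Set (↥X → Fin k) :=
  {g | ∃ f ∈ A, ∀ x : X, f ↑x = g x}

/-- The Mycielski ideal `𝔐ₖ`: all `A ⊆ k^ω` such that for every infinite `X ⊆ ω`
the set of restrictions of members of `A` to `X` is not all of `X → k`. -/
def Mycielski (k : ℕ) : Set (Set (ℕ → Fin k)) :=
  {A | ∀ X : Set ℕ, X.Infinite → restrictSet A X ≠ Set.univ}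

/-- The covering number of a family `I` of subsets of `α`: the least cardinality
of a subfamily of `I` whose union is all of `α`. -/
noncomputable def covNum {α : Type} (I : Set (Set α)) : Cardinal :=
  sInf {c : Cardinal | ∃ S : Set (Set α), S ⊆ I ∧ ⋃₀ S = Set.univ ∧ #S = c}

theorem singleton_mem_Mycielski {k : ℕ} (hk : 2 ≤ k) (f : ℕ → Fin k) : {f} ∈ Mycielski k := by
  intro X hX h
  obtain ⟨x, hx⟩ := hX.nonempty
  have hval (c : Fin k) : f x = c := by
    have hc : (fun _ : X => c) ∈ restrictSet {f} X := h ▸ Set.mem_univ _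
    obtain ⟨f', rfl, hf'⟩ := hc
    exact hf' ⟨x, hx⟩
  have h01 := (hval ⟨0, by omega⟩).symm.trans (hval ⟨1, by omega⟩)
  simp at h01

theorem preimage_mem_Mycielski {k m : ℕ} {φ : Fin m → Fin k} {ι : Fin k → Fin m}
    (hφ : Function.LeftInverse φ ι) {A : Set (ℕ → Fin k)} (hA : A ∈ Mycielski k) :
    (fun f : ℕ → Fin m => φ ∘ f) ⁻¹' A ∈ Mycielski m := by
  intro X hX h
  refine hA X hX (Set.eq_univ_of_forall fun g => ?_)
  have hg : ι ∘ g ∈ restrictSet ((fun f : ℕ → Fin m => φ ∘ f) ⁻¹' A) X := h ▸ Set.mem_univ _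
  obtain ⟨f, hf, hfg⟩ := hg
  exact ⟨φ ∘ f, hf, fun x => by simp [hfg x, hφ (g x)]⟩

/-- For every integer `k ≥ 2`, `cov(𝔐_{k+1}) ≤ cov(𝔐_k)`. -/
theorem covNum_Mycielski_succ_le (k : ℕ) (hk : 2 ≤ k) :
    covNum (Mycielski (k + 1)) ≤ covNum (Mycielski k) := by
  have : Nonempty (Fin k) := ⟨⟨0, by omega⟩⟩
  have hφ := Function.leftInverse_invFun (Fin.castSucc_injective k)
  unfold covNum
  refine le_csInf ?_ ?_
  · refine ⟨_, Set.range (fun f => {f}), ?_, ?_, rfl⟩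
    · rintro _ ⟨f, rfl⟩
      exact singleton_mem_Mycielski hk f
    · exact Set.eq_univ_of_forall fun f => ⟨{f}, ⟨f, rfl⟩, rfl⟩
  · rintro _ ⟨S, hS, hcov, rfl⟩
    set F : (ℕ → Fin (k + 1)) → (ℕ → Fin k) := fun f => Function.invFun Fin.castSucc ∘ f
    refine le_trans (csInf_le' ?_) (Cardinal.mk_image_le (f := (F ⁻¹' ·)) (s := S))
    refine ⟨(F ⁻¹' ·) '' S, ?_, ?_, rfl⟩
    · rintro _ ⟨A, hA, rfl⟩
      exact preimage_mem_Mycielski hφ (hS hA)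
    · refine Set.eq_univ_of_forall fun f => ?_
      have hf : F f ∈ ⋃₀ S := hcov ▸ Set.mem_univ _
      obtain ⟨A, hA, hfA⟩ := hf
      exact ⟨_, ⟨A, hA, rfl⟩, hfA⟩
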